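/- arXiv:2502.20666 — 2 statements merged into one kernel-verified Lean document; each statement's English description precedes it below -/
import Mathlib

section
/- Let X be a complex Banach space. The set of invertible bounded linear operators on X having the shadowing property is open in the operator-norm topology: if L is an invertible bounded linear operator on X with the shadowing property, then there is ε > 0 such that every invertible bounded linear operator L' on X with ‖L − L'‖ < ε has the shadowing property. -/
open Filter Topology

variable {X : Type*} [NormedAddCommGroup X] [NormedSpace ℂ X] [CompleteSpace X]

/-- `L` has the shadowing property. -/
def ShadowingProperty (L : X ≃L[ℂ] X) : Prop :=
  ∀ ε > (0 : ℝ), ∃ δ > (0 : ℝ), ∀ x : ℤ → X,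
    (∀ n : ℤ, ‖L (x n) - x (n + 1)‖ ≤ δ) →
    ∃ p : X, ∀ n : ℤ, ‖(L ^ n) p - x n‖ ≤ ε

/-!
The defect of a sequence `y` is the sequence `n ↦ L (y n) - y (n + 1)`, which vanishes exactly on
the orbits of `L`. Since `L` is invertible, every sequence is the defect of some, possibly
unbounded, `x`; and `x` stays within bounded distance of an orbit exactly when its defect is also
the defect of a bounded sequence, namely of the difference between `x` and that orbit. By the open
mapping theorem, shadowing thus amounts to surjectivity of the defect operator on bounded
sequences. This operator depends continuously on `L`, and surjectivity is an open condition on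
bounded operators between Banach spaces.
-/

open Function
open scoped BoundedContinuousFunction

section Sequences

theorem exists_int_seq_forall_add_one_eq {α : Type*} [Nonempty α] (f : ℤ → α ≃ α) :
    ∃ x : ℤ → α, ∀ n, x (n + 1) = f n (x n) := by
  let x (n : ℤ) : α := n.inductionOn' 0 (Classical.arbitrary α)
    (fun k _ a ↦ f k a) (fun k _ a ↦ (f (k - 1)).symm a)
  refine ⟨x, fun n ↦ ?_⟩
  rcases le_or_gt 0 n with hn | hn
  · exact Int.inductionOn'_add_one hn
  · have hpred : x (n + 1 - 1) = (f (n + 1 - 1)).symm (x (n + 1)) := Int.inductionOn'_sub_one hn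
    rw [add_sub_cancel_right] at hpred
    exact ((f n).eq_symm_apply.1 hpred).symm

variable {R M : Type*} [Semiring R] [TopologicalSpace M]

section AddCommMonoid

variable [AddCommMonoid M] [Module R M] (L : M ≃L[R] M)

theorem zpow_add_one_apply (n : ℤ) (p : M) : (L ^ (n + 1)) p = L ((L ^ n) p) := by
  rw [add_comm, zpow_one_add]
  rfl

theorem exists_forall_zpow_apply_eq_iff (u : ℤ → M) :
    (∃ p, ∀ n, (L ^ n) p = u n) ↔ ∀ n, L (u n) = u (n + 1) := by
  constructor
  · rintro ⟨p, hp⟩ n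
    rw [← hp, ← hp, zpow_add_one_apply]
  · refine fun hu ↦ ⟨u 0, fun n ↦ ?_⟩
    induction n with
    | zero => rfl
    | succ k ih => rw [zpow_add_one_apply, ih, hu]
    | pred k ih => exact L.injective <| by rw [← zpow_add_one_apply, hu, sub_add_cancel, ih]

end AddCommMonoid

theorem exists_forall_apply_sub_add_one_eq [AddCommGroup M] [Module R M] (L : M ≃L[R] M)
    (z : ℤ → M) : ∃ x : ℤ → M, ∀ n, L (x n) - x (n + 1) = z n := by
  obtain ⟨x, hx⟩ := exists_int_seq_forall_add_one_eq
    fun n ↦ L.toEquiv.trans (Equiv.subRight (z n))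
  refine ⟨x, fun n ↦ ?_⟩
  rw [hx]
  exact sub_sub_cancel _ _

end Sequences

variable {𝕜 E F : Type*} [NontriviallyNormedField 𝕜] [NormedAddCommGroup E] [NormedSpace 𝕜 E]
  [NormedAddCommGroup F] [NormedSpace 𝕜 F]

section Surjectivity

theorem surjective_of_nonempty_interior_range {M N : Type*} [AddCommGroup M] [Module 𝕜 M]
    [AddCommGroup N] [TopologicalSpace N] [ContinuousAdd N] [Module 𝕜 N] [ContinuousSMul 𝕜 N]
    (f : M →ₗ[𝕜] N) (hf : (interior (Set.range f)).Nonempty) : Surjective f :=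
  LinearMap.range_eq_top.1 <| Submodule.eq_top_of_nonempty_interior' f.range hf

theorem isOpen_setOf_surjective [CompleteSpace E] [CompleteSpace F] :
    IsOpen {f : E →L[𝕜] F | Surjective f} := by
  refine Metric.isOpen_iff.2 fun f hf ↦ ?_
  have hrange : f.range = ⊤ := LinearMap.range_eq_top.2 hf
  let s := f.nonlinearRightInverseOfSurjective hrange
  have hs : 0 < s.nnnorm := f.nonlinearRightInverseOfSurjective_nnnorm_pos hrange
  refine ⟨(s.nnnorm : ℝ)⁻¹, by positivity, fun g hg ↦ ?_⟩
  have happrox : ApproximatesLinearOn g f Set.univ ‖g - f‖₊ :=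
    ApproximatesLinearOn.approximatesLinearOn_iff_lipschitzOnWith.2
      (g - f).lipschitz.lipschitzOnWith
  have hopen : IsOpen (Set.range g) := by
    simpa only [Set.image_univ] using
      happrox.open_image s isOpen_univ (.inr (by exact_mod_cast mem_ball_iff_norm.1 hg))
  exact surjective_of_nonempty_interior_range (g : E →ₗ[𝕜] F) <| by
    simpa only [ContinuousLinearMap.coe_coe, hopen.interior_eq] using Set.range_nonempty g

end Surjectivity

section OrbitDefect

/-- The operator `y ↦ (n ↦ A (y n) - y (n + 1))` on bounded two-sided sequences, which measures how
far `y` is from being an orbit of `A`. Bounded sequences are encoded as bounded continuous functions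
on the discrete space `ℤ`. -/
noncomputable def orbitDefect (A : E →L[𝕜] E) : (ℤ →ᵇ E) →L[𝕜] (ℤ →ᵇ E) :=
  A.compLeftContinuousBounded ℤ -
    BoundedContinuousFunction.compContinuousCLM E 𝕜 ⟨(· + 1), continuous_of_discreteTopology⟩

theorem orbitDefect_apply (A : E →L[𝕜] E) (y : ℤ →ᵇ E) (n : ℤ) :
    orbitDefect A y n = A (y n) - y (n + 1) :=
  rfl

theorem lipschitzWith_orbitDefect :
    LipschitzWith 1 (orbitDefect : (E →L[𝕜] E) → (ℤ →ᵇ E) →L[𝕜] (ℤ →ᵇ E)) := by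
  refine LipschitzWith.mk_one fun A B ↦ ?_
  rw [dist_eq_norm, dist_eq_norm]
  refine ContinuousLinearMap.opNorm_le_bound _ (norm_nonneg _) fun y ↦ ?_
  refine (BoundedContinuousFunction.norm_le (by positivity)).2 fun n ↦ ?_
  calc ‖orbitDefect A y n - orbitDefect B y n‖
      = ‖(A - B) (y n)‖ := by
        rw [orbitDefect_apply, orbitDefect_apply, sub_sub_sub_cancel_right, sub_apply]
    _ ≤ ‖A - B‖ * ‖y‖ := (A - B).le_opNorm_of_le (y.norm_coe_le_norm n)

end OrbitDefect

section Shadowing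

/-- The shadowing property of an invertible operator over an arbitrary nontrivially normed field;
`ShadowingProperty` is the case of complex scalars. -/
def HasShadowing (L : E ≃L[𝕜] E) : Prop :=
  ∀ ε > (0 : ℝ), ∃ δ > (0 : ℝ), ∀ x : ℤ → E,
    (∀ n : ℤ, ‖L (x n) - x (n + 1)‖ ≤ δ) →
    ∃ p : E, ∀ n : ℤ, ‖(L ^ n) p - x n‖ ≤ ε

variable {L : E ≃L[𝕜] E}

theorem HasShadowing.surjective_orbitDefect (hL : HasShadowing L) :
    Surjective (orbitDefect (L : E →L[𝕜] E)) := by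
  obtain ⟨δ, hδ, hshadow⟩ := hL 1 one_pos
  have hball : Metric.closedBall 0 δ ⊆ Set.range (orbitDefect (L : E →L[𝕜] E)) := by
    intro z hz
    obtain ⟨x, hx⟩ := exists_forall_apply_sub_add_one_eq L z
    obtain ⟨p, hp⟩ := hshadow x fun n ↦ by
      rw [hx]
      exact (z.norm_coe_le_norm n).trans (mem_closedBall_zero_iff.1 hz)
    let y : ℤ →ᵇ E := .ofNormedAddCommGroup (fun n ↦ x n - (L ^ n) p)
      continuous_of_discreteTopology 1 fun n ↦ (norm_sub_rev _ _).trans_le (hp n)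
    refine ⟨y, BoundedContinuousFunction.ext fun n ↦ ?_⟩
    calc L (x n - (L ^ n) p) - (x (n + 1) - (L ^ (n + 1)) p)
        = L (x n) - x (n + 1) := by rw [map_sub, zpow_add_one_apply, sub_sub_sub_cancel_right]
      _ = z n := hx n
  exact surjective_of_nonempty_interior_range (orbitDefect (L : E →L[𝕜] E)).toLinearMap
    ⟨0, mem_interior_iff_mem_nhds.2 <|
      mem_of_superset (Metric.closedBall_mem_nhds 0 hδ) hball⟩

theorem HasShadowing.of_surjective_orbitDefect [CompleteSpace E]
    (hL : Surjective (orbitDefect (L : E →L[𝕜] E))) : HasShadowing L := by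
  intro ε hε
  obtain ⟨C, hC, hpreimage⟩ := (orbitDefect (L : E →L[𝕜] E)).exists_preimage_norm_le hL
  have hδ : 0 < ε / C := div_pos hε hC
  refine ⟨ε / C, hδ, fun x hx ↦ ?_⟩
  let z : ℤ →ᵇ E := .ofNormedAddCommGroup (fun n ↦ L (x n) - x (n + 1))
    continuous_of_discreteTopology (ε / C) hx
  obtain ⟨y, hyz, hy⟩ := hpreimage z
  have hyε : ‖y‖ ≤ ε := calc
    ‖y‖ ≤ C * ‖z‖ := hy
    _ ≤ C * (ε / C) := by
      gcongr
      exact BoundedContinuousFunction.norm_ofNormedAddCommGroup_le _ hδ.le hx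
    _ = ε := mul_div_cancel₀ ε hC.ne'
  have hdefect (n : ℤ) : L (y n) - y (n + 1) = L (x n) - x (n + 1) := DFunLike.congr_fun hyz n
  obtain ⟨p, hp⟩ := (exists_forall_zpow_apply_eq_iff L (fun n ↦ x n - y n)).2 fun n ↦ by
    rw [map_sub, sub_eq_sub_iff_sub_eq_sub]
    exact (hdefect n).symm
  refine ⟨p, fun n ↦ ?_⟩
  rw [hp, sub_sub_cancel_left, norm_neg]
  exact (y.norm_coe_le_norm n).trans hyε

theorem hasShadowing_iff_surjective_orbitDefect [CompleteSpace E] :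
    HasShadowing L ↔ Surjective (orbitDefect (L : E →L[𝕜] E)) :=
  ⟨HasShadowing.surjective_orbitDefect, HasShadowing.of_surjective_orbitDefect⟩

theorem shadowing_isOpen_general [CompleteSpace E] (L : E ≃L[𝕜] E) (hL : HasShadowing L) :
    ∃ ε > (0 : ℝ), ∀ L' : E ≃L[𝕜] E,
      ‖(L : E →L[𝕜] E) - (L' : E →L[𝕜] E)‖ < ε → HasShadowing L' := by
  have hopen : IsOpen {A : E →L[𝕜] E | Surjective (orbitDefect A)} :=
    isOpen_setOf_surjective.preimage lipschitzWith_orbitDefect.continuous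
  obtain ⟨ε, hε, hball⟩ :=
    Metric.isOpen_iff.1 hopen L (hasShadowing_iff_surjective_orbitDefect.1 hL)
  exact ⟨ε, hε, fun L' hL' ↦
    hasShadowing_iff_surjective_orbitDefect.2 (hball (mem_ball_iff_norm'.2 hL'))⟩

end Shadowing

/-- The set of operators with the shadowing property is open in operator norm. -/
theorem shadowing_isOpen (L : X ≃L[ℂ] X) (hL : ShadowingProperty L) :
    ∃ ε > (0 : ℝ), ∀ L' : X ≃L[ℂ] X,
      ‖(L : X →L[ℂ] X) - (L' : X →L[ℂ] X)‖ < ε → ShadowingProperty L' :=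
  shadowing_isOpen_general L hL
end

section
/- Let X be a complex Banach space and L an invertible bounded linear operator on X. The set H = {x ∈ X : Lⁿ(x) → 0 as n → ±∞} of homoclinic points of L is a subspace of X with L(H) = H, and H is closed if and only if H = {0}. -/
/-!
The powers of `L` map the subspace `H` of homoclinic points to itself, and every orbit in `H` is
bounded. If `H` is complete, the uniform boundedness principle on `H` gives a constant `C` with
`‖Lⁿ x‖ ≤ C ‖x‖` for all `x ∈ H` and `n ∈ ℤ`. Applied to the point `Lⁿ x` and the exponent `-n`,
this reads `‖x‖ ≤ C ‖Lⁿ x‖`, and the right-hand side tends to `0`.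
-/

open Filter Topology

variable {X : Type*} [NormedAddCommGroup X] [NormedSpace ℂ X] [CompleteSpace X]

/-- The set of homoclinic points of `L`: points whose orbit tends to `0`
both forwards and backwards. -/
def Homoclinic (L : X ≃L[ℂ] X) : Set X :=
  {x : X | Tendsto (fun n : ℤ => (L ^ n) x) atTop (𝓝 0) ∧
    Tendsto (fun n : ℤ => (L ^ n) x) atBot (𝓝 0)}

section UniformBoundedness

variable {𝕜 𝕜₂ E F ι : Type*} [NontriviallyNormedField 𝕜] [NontriviallyNormedField 𝕜₂]
  {σ : 𝕜 →+* 𝕜₂} [RingHomIsometric σ]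
  [SeminormedAddCommGroup E] [NormedSpace 𝕜 E] [SeminormedAddCommGroup F] [NormedSpace 𝕜₂ F]

theorem exists_norm_apply_le_mul_norm_of_isComplete {S : Submodule 𝕜 E}
    (hS : IsComplete (S : Set E)) {T : ι → E →SL[σ] F}
    (hT : ∀ x ∈ S, BddAbove (Set.range fun i => ‖T i x‖)) :
    ∃ C, ∀ i, ∀ x ∈ S, ‖T i x‖ ≤ C * ‖x‖ := by
  have : CompleteSpace S := hS.completeSpace_coe
  obtain ⟨C, hC⟩ := banach_steinhaus (g := fun i => (T i).comp S.subtypeL) fun x =>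
    (hT x x.2).imp fun _ hB i => hB ⟨i, rfl⟩
  exact ⟨C, fun i x hx => ContinuousLinearMap.le_of_opNorm_le _ (hC i) ⟨x, hx⟩⟩

end UniformBoundedness

section TopologicalModule

variable {R E : Type*} [Semiring R] [AddCommMonoid E] [TopologicalSpace E] [Module R E]

theorem zpow_apply_zpow_apply (L : E ≃L[R] E) (m n : ℤ) (x : E) :
    (L ^ m) ((L ^ n) x) = (L ^ (m + n)) x :=
  (DFunLike.congr_fun (zpow_add L m n) x).symm

theorem zpow_neg_apply_zpow_apply (L : E ≃L[R] E) (n : ℤ) (x : E) :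
    (L ^ (-n)) ((L ^ n) x) = x := by
  rw [zpow_neg]
  exact (L ^ n).symm_apply_apply x

variable [ContinuousAdd E] [ContinuousConstSMul R E]

/-- The homoclinic points of an automorphism `L` of a topological module, as a submodule.
Convergence as `n → +∞` and as `n → -∞` is encoded as convergence along the cofinite filter
on `ℤ`. -/
def homoclinicSubmodule (L : E ≃L[R] E) : Submodule R E where
  carrier := {x | Tendsto (fun n : ℤ => (L ^ n) x) cofinite (𝓝 0)}
  add_mem' hx hy := by simpa using Tendsto.add hx hy
  zero_mem' := tendsto_const_nhds.congr fun n => (map_zero (L ^ n)).symm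
  smul_mem' c _ hx := by simpa using Tendsto.const_smul hx c

variable {L : E ≃L[R] E} {x : E}

theorem mem_homoclinicSubmodule :
    x ∈ homoclinicSubmodule L ↔ Tendsto (fun n : ℤ => (L ^ n) x) cofinite (𝓝 0) :=
  Iff.rfl

theorem zpow_apply_mem_homoclinicSubmodule (hx : x ∈ homoclinicSubmodule L) (m : ℤ) :
    (L ^ m) x ∈ homoclinicSubmodule L := by
  simp only [mem_homoclinicSubmodule, zpow_apply_zpow_apply]
  exact hx.comp (add_left_injective m).tendsto_cofinite

theorem image_homoclinicSubmodule (L : E ≃L[R] E) :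
    L '' (homoclinicSubmodule L : Set E) = homoclinicSubmodule L := by
  refine Set.Subset.antisymm ?_ fun y hy => ?_
  · rintro _ ⟨x, hx, rfl⟩
    simpa using zpow_apply_mem_homoclinicSubmodule hx 1
  · have hy' : L⁻¹ y ∈ homoclinicSubmodule L := by
      simpa using zpow_apply_mem_homoclinicSubmodule hy (-1)
    exact ⟨L⁻¹ y, hy', L.apply_symm_apply y⟩

end TopologicalModule

section NormedSpace

variable {𝕜 E : Type*} [NontriviallyNormedField 𝕜]

theorem bddAbove_range_norm_zpow_apply [SeminormedAddCommGroup E] [NormedSpace 𝕜 E]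
    {L : E ≃L[𝕜] E} {x : E} (hx : x ∈ homoclinicSubmodule L) :
    BddAbove (Set.range fun n : ℤ => ‖(L ^ n) x‖) :=
  (mem_homoclinicSubmodule.1 hx).norm.bddAbove_range_of_cofinite

theorem exists_norm_le_mul_norm_zpow_apply [SeminormedAddCommGroup E] [NormedSpace 𝕜 E]
    {L : E ≃L[𝕜] E} (hL : IsComplete (homoclinicSubmodule L : Set E)) :
    ∃ C, ∀ n : ℤ, ∀ x ∈ homoclinicSubmodule L, ‖x‖ ≤ C * ‖(L ^ n) x‖ := by
  obtain ⟨C, hC⟩ := exists_norm_apply_le_mul_norm_of_isComplete hL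
    (T := fun n : ℤ => ((L ^ n : E ≃L[𝕜] E) : E →L[𝕜] E))
    fun _ hx => bddAbove_range_norm_zpow_apply hx
  refine ⟨C, fun n x hx => ?_⟩
  calc ‖x‖ = ‖(L ^ (-n)) ((L ^ n) x)‖ := by rw [zpow_neg_apply_zpow_apply]
    _ ≤ C * ‖(L ^ n) x‖ := hC (-n) _ (zpow_apply_mem_homoclinicSubmodule hx n)

variable [NormedAddCommGroup E] [NormedSpace 𝕜 E]

theorem isComplete_homoclinicSubmodule_iff {L : E ≃L[𝕜] E} :
    IsComplete (homoclinicSubmodule L : Set E) ↔ (homoclinicSubmodule L : Set E) = {0} := by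
  refine ⟨fun hL => ?_, fun hL => hL ▸ isCompact_singleton.isComplete⟩
  obtain ⟨C, hC⟩ := exists_norm_le_mul_norm_zpow_apply hL
  refine Set.eq_singleton_iff_unique_mem.2 ⟨zero_mem _, fun x hx => ?_⟩
  have hlim : Tendsto (fun n : ℤ => C * ‖(L ^ n) x‖) cofinite (𝓝 0) := by
    simpa using (mem_homoclinicSubmodule.1 hx).norm.const_mul C
  exact norm_le_zero_iff.1 (ge_of_tendsto' hlim fun n => hC n x hx)

theorem homoclinic_subspace_closed_iff_general (L : E ≃L[𝕜] E) :
    L '' (homoclinicSubmodule L : Set E) = homoclinicSubmodule L ∧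
    (IsComplete (homoclinicSubmodule L : Set E) ↔ (homoclinicSubmodule L : Set E) = {0}) :=
  ⟨image_homoclinicSubmodule L, isComplete_homoclinicSubmodule_iff⟩

end NormedSpace

theorem coe_homoclinicSubmodule {E : Type*} [NormedAddCommGroup E] [NormedSpace ℂ E]
    (L : E ≃L[ℂ] E) : (homoclinicSubmodule L : Set E) = Homoclinic L := by
  ext x
  rw [SetLike.mem_coe, mem_homoclinicSubmodule, Int.cofinite_eq, tendsto_sup]
  exact and_comm

theorem homoclinic_subspace_closed_iff (L : X ≃L[ℂ] X) :
    (0 : X) ∈ Homoclinic L ∧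
    (∀ x ∈ Homoclinic L, ∀ y ∈ Homoclinic L, x + y ∈ Homoclinic L) ∧
    (∀ (c : ℂ), ∀ x ∈ Homoclinic L, c • x ∈ Homoclinic L) ∧
    ⇑L '' Homoclinic L = Homoclinic L ∧
    (IsClosed (Homoclinic L) ↔ Homoclinic L = {0}) := by
  have hcomplete : IsClosed (homoclinicSubmodule L : Set X) ↔
      IsComplete (homoclinicSubmodule L : Set X) := ⟨IsClosed.isComplete, IsComplete.isClosed⟩
  rw [← coe_homoclinicSubmodule, hcomplete]
  exact ⟨zero_mem _, fun _ hx _ => add_mem hx, fun c _ => Submodule.smul_mem _ c,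
    homoclinic_subspace_closed_iff_general L⟩
end
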